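/- Let C and D be model categories and g : C → D a functor left adjoint to f : D → C which forms a Quillen adjunction (g preserves cofibrations and trivial cofibrations). Then there exists an adjunction Lg ⊣ Rf between the homotopy categories, Lg : Ho(C) → Ho(D) and Rf : Ho(D) → Ho(C), such that Lg(l_C(X)) is isomorphic to l_D(g(X)) for every cofibrant object X of C, and Rf(l_D(Y)) is isomorphic to l_C(f(Y)) for every fibrant object Y of D. -/

import Mathlib

open CategoryTheory CategoryTheory.Limits

universe v v' u u'

/-- `f` is a retract of `g`: there are morphisms `i, r, j, s` exhibiting the arrow `f`
as a retract of the arrow `g` in the arrow category. -/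
def IsRetractOf {C : Type u} [Category.{v} C] {X Y X' Y' : C}
    (f : X ⟶ Y) (g : X' ⟶ Y') : Prop :=
  ∃ (i : X ⟶ X') (r : X' ⟶ X) (j : Y ⟶ Y') (s : Y' ⟶ Y),
    i ≫ r = 𝟙 X ∧ j ≫ s = 𝟙 Y ∧ i ≫ g = f ≫ j ∧ g ≫ s = r ≫ f

/-- A model category structure (in the sense of Quillen) on a category `C`:
weak equivalences `W`, fibrations `Fib` and cofibrations `Cof`, satisfying
two-out-of-three, stability under composition and retracts, the lifting axioms,
and the factorization axioms. (The category `C` is moreover assumed to be complete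
and cocomplete, via the `HasLimits`/`HasColimits` instances in the statements.) -/
structure ModelStructure (C : Type u) [Category.{v} C] where
  W : MorphismProperty C
  Fib : MorphismProperty C
  Cof : MorphismProperty C
  /-- two-out-of-three, part 1 -/
  W_comp : ∀ {X Y Z : C} (f : X ⟶ Y) (g : Y ⟶ Z), W f → W g → W (f ≫ g)
  /-- two-out-of-three, part 2 -/
  W_of_comp_right : ∀ {X Y Z : C} (f : X ⟶ Y) (g : Y ⟶ Z), W (f ≫ g) → W g → W f
  /-- two-out-of-three, part 3 -/
  W_of_comp_left : ∀ {X Y Z : C} (f : X ⟶ Y) (g : Y ⟶ Z), W (f ≫ g) → W f → W g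
  Fib_comp : ∀ {X Y Z : C} (f : X ⟶ Y) (g : Y ⟶ Z), Fib f → Fib g → Fib (f ≫ g)
  Cof_comp : ∀ {X Y Z : C} (f : X ⟶ Y) (g : Y ⟶ Z), Cof f → Cof g → Cof (f ≫ g)
  W_retract : ∀ {X Y X' Y' : C} (f : X ⟶ Y) (g : X' ⟶ Y'), IsRetractOf f g → W g → W f
  Fib_retract : ∀ {X Y X' Y' : C} (f : X ⟶ Y) (g : X' ⟶ Y'), IsRetractOf f g → Fib g → Fib f
  Cof_retract : ∀ {X Y X' Y' : C} (f : X ⟶ Y) (g : X' ⟶ Y'), IsRetractOf f g → Cof g → Cof f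
  /-- lifting axiom: cofibrations have the left lifting property against trivial
  fibrations and trivial cofibrations against fibrations -/
  lifting : ∀ {A B X Y : C} (i : A ⟶ B) (p : X ⟶ Y), Cof i → Fib p → (W i ∨ W p) →
    ∀ (f : A ⟶ X) (g : B ⟶ Y), f ≫ p = i ≫ g → ∃ h : B ⟶ X, i ≫ h = f ∧ h ≫ p = g
  /-- factorization as a trivial cofibration followed by a fibration -/
  factorization_trivCof_fib : ∀ {X Y : C} (f : X ⟶ Y), ∃ (Z : C) (i : X ⟶ Z) (p : Z ⟶ Y),
    Cof i ∧ W i ∧ Fib p ∧ i ≫ p = f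
  /-- factorization as a cofibration followed by a trivial fibration -/
  factorization_cof_trivFib : ∀ {X Y : C} (f : X ⟶ Y), ∃ (Z : C) (i : X ⟶ Z) (p : Z ⟶ Y),
    Cof i ∧ Fib p ∧ W p ∧ i ≫ p = f

namespace ModelStructure

variable {C : Type u} [Category.{v} C]

/-- An object `X` is cofibrant if `∅ ⟶ X` is a cofibration. -/
def Cofibrant [HasColimits C] (M : ModelStructure C) (X : C) : Prop :=
  M.Cof (initial.to X)

/-- An object `X` is fibrant if `X ⟶ *` is a fibration. -/
def Fibrant [HasLimits C] (M : ModelStructure C) (X : C) : Prop :=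
  M.Fib (terminal.from X)

/-- Two morphisms `f g : X ⟶ Y` are homotopic if there is a cylinder-like object `CX`
with `i j : X ⟶ CX`, a trivial fibration `p : CX ⟶ X` with `i ≫ p = j ≫ p = 𝟙 X`, such that
the induced morphism `X ⨿ X ⟶ CX` is a cofibration, together with `h : CX ⟶ Y` with
`i ≫ h = f` and `j ≫ h = g`. -/
def Homotopic [HasColimits C] (M : ModelStructure C) {X Y : C} (f g : X ⟶ Y) : Prop :=
  ∃ (CX : C) (i j : X ⟶ CX) (p : CX ⟶ X) (h : CX ⟶ Y),
    M.Fib p ∧ M.W p ∧ i ≫ p = 𝟙 X ∧ j ≫ p = 𝟙 X ∧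
    M.Cof (coprod.desc i j) ∧ i ≫ h = f ∧ j ≫ h = g

end ModelStructure

/-!
By Ken Brown's lemma, a left Quillen functor preserves weak equivalences between cofibrant objects,
and its right adjoint preserves weak equivalences between fibrant objects. The inclusions of the
cofibrant and of the fibrant objects are left and right derivability structures, so the two derived
functors exist, may be computed on these objects, and stay derived functors after composition with
any functor. By a theorem of Maltsiniotis, such absolute derived functors of adjoint functors are
again adjoint.
-/

open HomotopicalAlgebra

section KanExtension

variable {C D H : Type*} [Category* C] [Category* D] [Category* H]
  {L : C ⥤ D} {F : C ⥤ H} {F' : D ⥤ H}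

lemma isRightKanExtension_iff_bijective (α : L ⋙ F' ⟶ F) :
    F'.IsRightKanExtension α ↔
      ∀ G : D ⥤ H, Function.Bijective fun γ : G ⟶ F' ↦ Functor.whiskerLeft L γ ≫ α := by
  refine ⟨fun _ G ↦ (F'.homEquivOfIsRightKanExtension α G).bijective, fun h ↦ ?_⟩
  choose lift lift_fac using fun E : L.RightExtension F ↦ (h E.left).surjective E.hom
  exact ⟨⟨IsTerminal.ofUniqueHom (fun E ↦ CostructuredArrow.homMk (lift E) (lift_fac E))
    fun E m ↦ CostructuredArrow.hom_ext _ _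
      ((h E.left).injective ((CostructuredArrow.w m).trans (lift_fac E).symm))⟩⟩

lemma isLeftKanExtension_iff_bijective (α : F ⟶ L ⋙ F') :
    F'.IsLeftKanExtension α ↔
      ∀ G : D ⥤ H, Function.Bijective fun γ : F' ⟶ G ↦ α ≫ Functor.whiskerLeft L γ := by
  refine ⟨fun _ G ↦ (F'.homEquivOfIsLeftKanExtension α G).bijective, fun h ↦ ?_⟩
  choose desc desc_fac using fun E : L.LeftExtension F ↦ (h E.right).surjective E.hom
  exact ⟨⟨IsInitial.ofUniqueHom (fun E ↦ StructuredArrow.homMk (desc E) (desc_fac E))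
    fun E m ↦ StructuredArrow.hom_ext _ _
      ((h E.right).injective ((StructuredArrow.w m).trans (desc_fac E).symm))⟩⟩

lemma natTrans_op_bijective (F G : C ⥤ D) :
    Function.Bijective fun α : F ⟶ G ↦ NatTrans.op α :=
  Function.bijective_iff_has_inverse.2 ⟨NatTrans.removeOp, fun _ ↦ rfl, fun _ ↦ rfl⟩

lemma isRightKanExtension_iff_op (α : L ⋙ F' ⟶ F) :
    F'.IsRightKanExtension α ↔
      F'.op.IsLeftKanExtension (L := L.op) (F := F.op) (NatTrans.op α) := by
  have bijective_iff (G : D ⥤ H) :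
      (Function.Bijective fun γ : G ⟶ F' ↦ Functor.whiskerLeft L γ ≫ α) ↔
        Function.Bijective fun γ : F'.op ⟶ G.op ↦
          (NatTrans.op α : F.op ⟶ L.op ⋙ F'.op) ≫ Functor.whiskerLeft L.op γ := by
    rw [← Function.Bijective.of_comp_iff' (natTrans_op_bijective (L ⋙ G) F),
      ← Function.Bijective.of_comp_iff _ (natTrans_op_bijective G F')]
    rfl
  rw [isRightKanExtension_iff_bijective, isLeftKanExtension_iff_bijective]
  exact ⟨fun h G ↦ (bijective_iff G.unop).1 (h G.unop), fun h G ↦ (bijective_iff G).2 (h G.op)⟩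

end KanExtension

section DerivedFunctor

variable {C D H : Type*} [Category* C] [Category* D] [Category* H]
  {W : MorphismProperty C} {L : C ⥤ D} [L.IsLocalization W] {F : C ⥤ H} {LF : D ⥤ H}

lemma isLeftDerivedFunctor_iff_op (α : L ⋙ LF ⟶ F) :
    LF.IsLeftDerivedFunctor α W ↔
      LF.op.IsRightDerivedFunctor (L := L.op) (F := F.op) (NatTrans.op α) W.op := by
  rw [Functor.isLeftDerivedFunctor_iff_isRightKanExtension,
    Functor.isRightDerivedFunctor_iff_isLeftKanExtension, isRightKanExtension_iff_op]

lemma hasLeftDerivedFunctor_of_op (F : C ⥤ H) (W : MorphismProperty C)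
    [F.op.HasRightDerivedFunctor W.op] : F.HasLeftDerivedFunctor W := by
  let RF := F.op.totalRightDerived W.Q.op W.op
  let α : W.Q ⋙ RF.unop ⟶ F :=
    NatTrans.removeOp (G := W.Q ⋙ RF.unop) (F.op.totalRightDerivedUnit W.Q.op W.op)
  have : RF.unop.IsLeftDerivedFunctor α W :=
    (isLeftDerivedFunctor_iff_op α).2
      (inferInstanceAs (RF.IsRightDerivedFunctor (F.op.totalRightDerivedUnit W.Q.op W.op) W.op))
  exact Functor.HasLeftDerivedFunctor.mk' RF.unop α

end DerivedFunctor

section DerivabilityStructure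

variable {C₁ C₂ D₂ H : Type*} [Category* C₁] [Category* C₂] [Category* D₂] [Category* H]
  {W₁ : MorphismProperty C₁} {W₂ : MorphismProperty C₂} {Φ : LocalizerMorphism W₁ W₂}
  [Φ.IsLeftDerivabilityStructure] {F : C₂ ⥤ H}

lemma hasLeftDerivedFunctor_of_derives (h : Φ.Derives F) : F.HasLeftDerivedFunctor W₂ := by
  have hop : Φ.op.Derives F.op := h.op
  have := hop.hasPointwiseRightDerivedFunctor
  exact hasLeftDerivedFunctor_of_op F W₂

lemma isLeftDerivedFunctor_iff_isIso_app {L : C₂ ⥤ D₂} [L.IsLocalization W₂] {LF : D₂ ⥤ H}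
    (h : Φ.Derives F) (α : L ⋙ LF ⟶ F) :
    LF.IsLeftDerivedFunctor α W₂ ↔ ∀ X, IsIso (α.app (Φ.functor.obj X)) := by
  have hop : Φ.op.Derives F.op := h.op
  rw [isLeftDerivedFunctor_iff_op, hop.isRightDerivedFunctor_iff_isIso]
  exact ⟨fun hα X ↦ (isIso_op_iff _).1 (hα (Opposite.op X)),
    fun hα X ↦ (isIso_op_iff _).2 (hα X.unop)⟩

end DerivabilityStructure

section DerivedAdjunction

variable {A₁ A₂ C₁ C₂ D₁ D₂ : Type*} [Category* A₁] [Category* A₂] [Category* C₁] [Category* C₂]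
  [Category* D₁] [Category* D₂] {V₁ : MorphismProperty A₁} {V₂ : MorphismProperty A₂}
  {W₁ : MorphismProperty C₁} {W₂ : MorphismProperty C₂}
  {Φ₁ : LocalizerMorphism V₁ W₁} {Φ₂ : LocalizerMorphism V₂ W₂}
  [Φ₁.IsLeftDerivabilityStructure] [Φ₂.IsRightDerivabilityStructure]
  {L₁ : C₁ ⥤ D₁} {L₂ : C₂ ⥤ D₂} [L₁.IsLocalization W₁] [L₂.IsLocalization W₂]
  {G : C₁ ⥤ C₂} {F : C₂ ⥤ C₁} {G' : D₁ ⥤ D₂} {F' : D₂ ⥤ D₁}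

/-- Maltsiniotis' derived adjunction, for functors derived by means of a left derivability structure
`Φ₁` and a right derivability structure `Φ₂`. Unlike `CategoryTheory.Adjunction.derived`, it does
not ask for absoluteness of the derived functors, which `Φ₁` and `Φ₂` provide. -/
noncomputable def derivedAdjunction (adj : G ⊣ F)
    (hG : Φ₁.Derives (G ⋙ L₂)) (hF : Φ₂.Derives (F ⋙ L₁))
    (α : L₁ ⋙ G' ⟶ G ⋙ L₂) (β : F ⋙ L₁ ⟶ L₂ ⋙ F')
    [G'.IsLeftDerivedFunctor α W₁] [F'.IsRightDerivedFunctor β W₂] : G' ⊣ F' :=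
  have hGF' : Φ₁.Derives ((G ⋙ L₂) ⋙ F') := hG.of_comp _ _ F'
  have hFG' : Φ₂.Derives ((F ⋙ L₁) ⋙ G') := hF.of_comp _ _ G'
  have : (G' ⋙ F').IsLeftDerivedFunctor
      ((Functor.associator _ _ _).inv ≫ Functor.whiskerRight α F') W₁ :=
    (isLeftDerivedFunctor_iff_isIso_app hGF' _).2 fun X ↦ by
      have := (isLeftDerivedFunctor_iff_isIso_app hG α).1 inferInstance X
      simp only [NatTrans.comp_app, Functor.associator_inv_app, Functor.whiskerRight_app]
      infer_instance
  have : (F' ⋙ G').IsRightDerivedFunctor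
      (Functor.whiskerRight β G' ≫ (Functor.associator _ _ _).hom) W₂ :=
    hFG'.isRightDerivedFunctor_of_isIso _ fun X ↦ by
      have := hF.isIso_of_isRightDerivedFunctor β X
      simp only [NatTrans.comp_app, Functor.associator_hom_app, Functor.whiskerRight_app]
      infer_instance
  adj.derived W₁ W₂ α β

end DerivedAdjunction

section KenBrown

variable {C E : Type*} [Category* C] [Category* E] [ModelCategory C]
  {F : C ⥤ E} {W : MorphismProperty E} [W.HasTwoOutOfThreeProperty]

lemma map_weakEquivalence_of_isCofibrant
    (hF : ∀ ⦃A B : C⦄ (i : A ⟶ B) [IsCofibrant A] [IsCofibrant B] [Cofibration i]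
      [WeakEquivalence i], W (F.map i))
    {X Y : C} [IsCofibrant X] [IsCofibrant Y] (w : X ⟶ Y) [WeakEquivalence w] :
    W (F.map w) := by
  obtain ⟨b⟩ : Nonempty (CofibrantBrownFactorization w) := inferInstance
  have : Cofibration b.i := (cofibration_iff _).2 b.hi
  have : IsCofibrant b.Z := isCofibrant_of_cofibration b.i
  have hp : W (F.map b.p) := W.of_precomp _ _ (hF b.s) <| by
    rw [← F.map_comp, b.s_p]
    exact hF (𝟙 Y)
  rw [← b.fac, F.map_comp]
  exact W.comp_mem _ _ (hF b.i) hp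

lemma map_weakEquivalence_of_isFibrant
    (hF : ∀ ⦃A B : C⦄ (p : A ⟶ B) [IsFibrant A] [IsFibrant B] [Fibration p]
      [WeakEquivalence p], W (F.map p))
    {X Y : C} [IsFibrant X] [IsFibrant Y] (w : X ⟶ Y) [WeakEquivalence w] :
    W (F.map w) := by
  obtain ⟨b⟩ : Nonempty (FibrantBrownFactorization w) := inferInstance
  have : Fibration b.p := (fibration_iff _).2 b.hp
  have : IsFibrant b.Z := isFibrant_of_fibration b.p
  have hi : W (F.map b.i) := W.of_postcomp _ _ (hF b.r) <| by
    rw [← F.map_comp, b.i_r]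
    exact hF (𝟙 X)
  rw [← b.fac, F.map_comp]
  exact W.comp_mem _ _ hi (hF b.p)

lemma cofibrantObject_derives (hF : (trivialCofibrations C).IsInvertedBy F) :
    (CofibrantObject.localizerMorphism C).Derives F := fun _ _ w hw ↦ by
  have : WeakEquivalence w.hom := (weakEquivalence_iff _).2 hw
  exact map_weakEquivalence_of_isCofibrant (W := .isomorphisms E)
    (fun _ _ i _ _ _ _ ↦ hF i (mem_trivialCofibrations i)) w.hom

lemma fibrantObject_derives (hF : (trivialFibrations C).IsInvertedBy F) :
    (FibrantObject.localizerMorphism C).Derives F := fun _ _ w hw ↦ by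
  have : WeakEquivalence w.hom := (weakEquivalence_iff _).2 hw
  exact map_weakEquivalence_of_isFibrant (W := .isomorphisms E)
    (fun _ _ p _ _ _ _ ↦ hF p (mem_trivialFibrations p)) w.hom

end KenBrown

section QuillenAdjunction

lemma rlp_le_inverseImage_rlp {C D : Type*} [Category* C] [Category* D] {g : C ⥤ D} {f : D ⥤ C}
    (adj : g ⊣ f) {W₁ : MorphismProperty C} {W₂ : MorphismProperty D}
    (h : W₁ ≤ W₂.inverseImage g) : W₂.rlp ≤ W₁.rlp.inverseImage f :=
  fun _ _ _ hp _ _ _ hi ↦ (adj.hasLiftingProperty_iff _ _).1 (hp _ (h _ hi))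

variable {C D : Type*} [Category* C] [Category* D] [ModelCategory C] [ModelCategory D]
  {g : C ⥤ D} {f : D ⥤ C}

lemma trivialFibrations_le_inverseImage (adj : g ⊣ f)
    (hcof : cofibrations C ≤ (cofibrations D).inverseImage g) :
    trivialFibrations D ≤ (trivialFibrations C).inverseImage f := by
  simpa only [cofibrations_rlp] using rlp_le_inverseImage_rlp adj hcof

theorem statement5_general {HC HD : Type*} [Category* HC] [Category* HD]
    (LC : C ⥤ HC) [LC.IsLocalization (weakEquivalences C)]
    (LD : D ⥤ HD) [LD.IsLocalization (weakEquivalences D)] (adj : g ⊣ f)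
    (hcof : cofibrations C ≤ (cofibrations D).inverseImage g)
    (htriv : trivialCofibrations C ≤ (weakEquivalences D).inverseImage g) :
    ∃ (Lg : HC ⥤ HD) (Rf : HD ⥤ HC) (_ : Lg ⊣ Rf),
      (∀ X : C, IsCofibrant X → Nonempty (Lg.obj (LC.obj X) ≅ LD.obj (g.obj X))) ∧
      (∀ Y : D, IsFibrant Y → Nonempty (Rf.obj (LD.obj Y) ≅ LC.obj (f.obj Y))) := by
  have hg : (CofibrantObject.localizerMorphism C).Derives (g ⋙ LD) :=
    cofibrantObject_derives fun _ _ i hi ↦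
      Localization.inverts LD (weakEquivalences D) _ (htriv i hi)
  have hf : (FibrantObject.localizerMorphism D).Derives (f ⋙ LC) :=
    fibrantObject_derives fun _ _ p hp ↦
      Localization.inverts LC (weakEquivalences C) _
        (trivialFibrations_le_inverseImage adj hcof p hp).2
  have := hasLeftDerivedFunctor_of_derives hg
  have := hf.hasPointwiseRightDerivedFunctor
  let α := (g ⋙ LD).totalLeftDerivedCounit LC (weakEquivalences C)
  let β := (f ⋙ LC).totalRightDerivedUnit LD (weakEquivalences D)
  refine ⟨_, _, derivedAdjunction adj hg hf α β, fun X _ ↦ ?_, fun Y _ ↦ ?_⟩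
  · have : IsIso (α.app X) :=
      (isLeftDerivedFunctor_iff_isIso_app hg α).1 inferInstance (CofibrantObject.mk X)
    exact ⟨asIso (α.app X)⟩
  · have : IsIso (β.app Y) := hf.isIso_of_isRightDerivedFunctor β (FibrantObject.mk Y)
    exact ⟨(asIso (β.app Y)).symm⟩

end QuillenAdjunction

lemma isRetractOf_of_retractArrow {C : Type*} [Category* C] {X Y X' Y' : C} {f : X ⟶ Y}
    {g : X' ⟶ Y'} (h : RetractArrow f g) : IsRetractOf f g :=
  ⟨h.i.left, h.r.left, h.i.right, h.r.right, h.retract_left, h.retract_right, h.i_w, h.r_w.symm⟩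

namespace ModelStructure

variable {C : Type u} [Category.{v} C]

lemma hasLiftingProperty (M : ModelStructure C) {A B X Y : C} {i : A ⟶ B} {p : X ⟶ Y}
    (hi : M.Cof i) (hp : M.Fib p) (hW : M.W i ∨ M.W p) : HasLiftingProperty i p where
  sq_hasLift {a b} sq := by
    obtain ⟨l, il, lp⟩ := M.lifting i p hi hp hW a b sq.w
    exact ⟨⟨⟨l, il, lp⟩⟩⟩

/-- The model category in Mathlib's sense given by a `ModelStructure`. -/
abbrev toModelCategory [HasFiniteLimits C] [HasFiniteColimits C]
    (M : ModelStructure C) : ModelCategory C :=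
  { categoryWithFibrations := ⟨M.Fib⟩
    categoryWithCofibrations := ⟨M.Cof⟩
    categoryWithWeakEquivalences := ⟨M.W⟩
    cm2 :=
      { comp_mem := M.W_comp
        of_postcomp := fun u v hv huv ↦ M.W_of_comp_right u v huv hv
        of_precomp := fun u v hu huv ↦ M.W_of_comp_left u v huv hu }
    cm3a := ⟨fun h ↦ M.W_retract _ _ (isRetractOf_of_retractArrow h)⟩
    cm3b := ⟨fun h ↦ M.Fib_retract _ _ (isRetractOf_of_retractArrow h)⟩
    cm3c := ⟨fun h ↦ M.Cof_retract _ _ (isRetractOf_of_retractArrow h)⟩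
    cm4a := fun _ _ hi hw hp ↦ M.hasLiftingProperty hi.mem hp.mem (Or.inl hw.mem)
    cm4b := fun _ _ hi hp hw ↦ M.hasLiftingProperty hi.mem hp.mem (Or.inr hw.mem)
    cm5a := ⟨fun u ↦ by
      obtain ⟨Z, i, p, hi, hiW, hp, fac⟩ := M.factorization_trivCof_fib u
      exact ⟨⟨Z, i, p, fac, ⟨hi, hiW⟩, hp⟩⟩⟩
    cm5b := ⟨fun u ↦ by
      obtain ⟨Z, i, p, hi, hp, hpW, fac⟩ := M.factorization_cof_trivFib u
      exact ⟨⟨Z, i, p, fac, hi, ⟨hp, hpW⟩⟩⟩⟩ }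

end ModelStructure

/-- Let `C` and `D` be model categories and `g : C ⥤ D` left adjoint to
`f : D ⥤ C`, forming a Quillen adjunction (`g` preserves cofibrations and trivial
cofibrations). Then there is an adjunction `Lg ⊣ Rf` between the homotopy categories,
with `Lg(l_C(X)) ≅ l_D(g(X))` for every cofibrant `X` and `Rf(l_D(Y)) ≅ l_C(f(Y))` for
every fibrant `Y`. -/
theorem statement5 {C : Type u} [Category.{v} C] {D : Type u'} [Category.{v'} D]
    [HasLimits C] [HasColimits C] [HasLimits D] [HasColimits D]
    (M : ModelStructure C) (N : ModelStructure D)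
    (g : C ⥤ D) (f : D ⥤ C) (adj : g ⊣ f)
    (hcof : ∀ {X Y : C} (i : X ⟶ Y), M.Cof i → N.Cof (g.map i))
    (htrivcof : ∀ {X Y : C} (i : X ⟶ Y), M.Cof i → M.W i → N.Cof (g.map i) ∧ N.W (g.map i)) :
    ∃ (Lg : M.W.Localization ⥤ N.W.Localization)
      (Rf : N.W.Localization ⥤ M.W.Localization) (_ : Lg ⊣ Rf),
      (∀ X : C, M.Cofibrant X → Nonempty (Lg.obj (M.W.Q.obj X) ≅ N.W.Q.obj (g.obj X))) ∧
      (∀ Y : D, N.Fibrant Y → Nonempty (Rf.obj (N.W.Q.obj Y) ≅ M.W.Q.obj (f.obj Y))) := by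
  let _ := M.toModelCategory
  let _ := N.toModelCategory
  obtain ⟨Lg, Rf, derivedAdj, hLg, hRf⟩ :=
    statement5_general (weakEquivalences C).Q (weakEquivalences D).Q adj
      (fun _ _ i hi ↦ hcof i hi) (fun _ _ i hi ↦ (htrivcof i hi.1 hi.2).2)
  exact ⟨Lg, Rf, derivedAdj, fun X hX ↦ hLg X ⟨hX⟩, fun Y hY ↦ hRf Y ⟨hY⟩⟩
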